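/- arXiv:2407.10210 — 5 statements merged into one kernel-verified Lean document; each statement's English description precedes it below -/
import Mathlib

section
/- Let E be a nonempty subset of ℕ². Then the set E₀ of extreme points of the convex set Δ(E) ⊆ ℝ² is a finite subset of E, it satisfies Δ(E₀) = Δ(E), and E₀ ⊆ F for every subset F ⊆ ℕ² with Δ(F) = Δ(E). In other words, E₀ is the smallest subset of ℕ² whose Newton diagram equals Δ(E), and it is finite. -/
/-!
Every `E` has a finite subset with the same Newton diagram: its minimal points for the product
order, which are finitely many by Dickson's lemma. Shrink it to an inclusion-minimal finite set `M`
with `Δ(M) = Δ(E)`.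

* Extreme points of `Δ(F)` belong to `F`: an extreme point of a convex hull is one of the
  generators `v + w`, and `v + w` is the midpoint of `v` and `v + 2w`, so `w = 0`
  (`extremePoints_subset_image`). This gives the inclusion in every `F`, in particular in `M`.
* Conversely each `m ∈ M` is extreme. By minimality `m ∉ Δ(N)` with `N = M \ {m}`. Every point of
  `Δ(M)` lies in `m + K`, where the cone `K` consists of the quadrant and the positive
  multiples of `Δ(N) - m` (`mem_coneAt_of_mem`). As `m ∉ Δ(N)`, the cone `K` contains no line, so
  its apex is extreme (`mem_extremePoints_of_notMem`).
-/

/-- The Newton diagram `Δ(E)` of a set `E ⊆ ℕ²`: the convex hull in `ℝ²` of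
`E + (ℝ≥0)²`. -/
noncomputable def newtonDiagram (E : Set (ℕ × ℕ)) : Set (ℝ × ℝ) :=
  convexHull ℝ {x : ℝ × ℝ | ∃ v ∈ E, ∃ w : ℝ × ℝ,
    0 ≤ w.1 ∧ 0 ≤ w.2 ∧ x = (((v.1 : ℝ), (v.2 : ℝ)) + w)}

/-- The embedding of lattice points `ℕ² → ℝ²`. -/
def latticeEmbed (e : ℕ × ℕ) : ℝ × ℝ := ((e.1 : ℝ), (e.2 : ℝ))

/-- A point dominating a point of `E` coordinatewise is a generator of `Δ(E)`. -/
lemma mem_newtonDiagram_of_le {E : Set (ℕ × ℕ)} {v : ℕ × ℕ} (hv : v ∈ E) {x : ℝ × ℝ}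
    (hx : latticeEmbed v ≤ x) : x ∈ newtonDiagram E := by
  refine subset_convexHull ℝ _ ⟨v, hv, x - latticeEmbed v, ?_, ?_, ?_⟩
  · simpa using hx.1
  · simpa using hx.2
  · change x = latticeEmbed v + (x - latticeEmbed v)
    abel

/-- To bound `Δ(E)` by a convex set it suffices to treat the generators. -/
lemma newtonDiagram_subset {E : Set (ℕ × ℕ)} {C : Set (ℝ × ℝ)} (hC : Convex ℝ C)
    (h : ∀ v ∈ E, ∀ x, latticeEmbed v ≤ x → x ∈ C) : newtonDiagram E ⊆ C := by
  refine convexHull_min ?_ hC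
  rintro x ⟨v, hv, w, h1, h2, rfl⟩
  exact h v hv _ (le_add_of_nonneg_right (show (0 : ℝ × ℝ) ≤ w from ⟨h1, h2⟩))

lemma convex_newtonDiagram (E : Set (ℕ × ℕ)) : Convex ℝ (newtonDiagram E) :=
  convex_convexHull ℝ _

lemma isUpperSet_newtonDiagram (E : Set (ℕ × ℕ)) : IsUpperSet (newtonDiagram E) := by
  intro x y hxy hx
  have h : newtonDiagram E ⊆ (fun z => z + (y - x)) ⁻¹' newtonDiagram E := by
    refine newtonDiagram_subset ((convex_newtonDiagram E).translate_preimage_left _) ?_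
    intro v hv z hz
    exact mem_newtonDiagram_of_le hv (hz.trans (le_add_of_nonneg_right (sub_nonneg.2 hxy)))
  simpa using h hx

/-- If every point of `E` lies in `Δ(F)`, then `Δ(E) ⊆ Δ(F)`. -/
lemma newtonDiagram_subset_of {E F : Set (ℕ × ℕ)}
    (h : ∀ v ∈ E, latticeEmbed v ∈ newtonDiagram F) : newtonDiagram E ⊆ newtonDiagram F :=
  newtonDiagram_subset (convex_newtonDiagram F) fun v hv _ hx =>
    isUpperSet_newtonDiagram F hx (h v hv)

lemma newtonDiagram_mono {E F : Set (ℕ × ℕ)} (h : E ⊆ F) : newtonDiagram E ⊆ newtonDiagram F :=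
  newtonDiagram_subset_of fun _ hv => mem_newtonDiagram_of_le (h hv) le_rfl

lemma latticeEmbed_injective : Function.Injective latticeEmbed := by
  rintro ⟨a, b⟩ ⟨c, d⟩ h
  simpa [latticeEmbed] using h

lemma latticeEmbed_mono : Monotone latticeEmbed := by
  rintro ⟨a, b⟩ ⟨c, d⟩ ⟨h1, h2⟩
  exact ⟨Nat.cast_le.2 h1, Nat.cast_le.2 h2⟩

lemma extremePoints_subset_image (F : Set (ℕ × ℕ)) :
    (newtonDiagram F).extremePoints ℝ ⊆ latticeEmbed '' F := by
  intro x hx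
  obtain ⟨v, hv, w, h1, h2, hxw⟩ := extremePoints_convexHull_subset hx
  change x = latticeEmbed v + w at hxw
  have hw : (0 : ℝ × ℝ) ≤ w := ⟨h1, h2⟩
  -- `x = v + w` is the midpoint of `v` and `v + 2w`.
  have hmid : x ∈ openSegment ℝ (latticeEmbed v) (latticeEmbed v + (w + w)) := by
    refine ⟨1 / 2, 1 / 2, by norm_num, by norm_num, by norm_num, ?_⟩
    rw [hxw]
    module
  exact ⟨v, hv, hx.2 (mem_newtonDiagram_of_le hv le_rfl)
    (mem_newtonDiagram_of_le hv (le_add_of_nonneg_right (add_nonneg hw hw))) hmid⟩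

/-- The convex cone (with apex `0`) generated by the quadrant `(ℝ≥0)²` and `Δ(N) - p`. The positive
multiples of `Δ(N) - p` already absorb the quadrant, as `Δ(N)` is an upper set. -/
def coneAt (N : Set (ℕ × ℕ)) (p : ℝ × ℝ) : Set (ℝ × ℝ) :=
  {z | 0 ≤ z ∨ ∃ t : ℝ, 0 < t ∧ ∃ n ∈ newtonDiagram N, z = t • (n - p)}

lemma coneAt_smul {N : Set (ℕ × ℕ)} {p z : ℝ × ℝ} (hz : z ∈ coneAt N p) {a : ℝ} (ha : 0 < a) :
    a • z ∈ coneAt N p := by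
  rcases hz with hz | ⟨t, ht, n, hn, rfl⟩
  · exact Or.inl (smul_nonneg ha.le hz)
  · exact Or.inr ⟨a * t, mul_pos ha ht, n, hn, smul_smul _ _ _⟩

/-- Adding an element of the cone to an element of the part spanned by `Δ(N) - p` stays in that
part. -/
lemma coneAt_add_aux {N : Set (ℕ × ℕ)} {p z : ℝ × ℝ} (hz : z ∈ coneAt N p) {t : ℝ} (ht : 0 < t)
    {n : ℝ × ℝ} (hn : n ∈ newtonDiagram N) :
    ∃ s : ℝ, 0 < s ∧ ∃ k ∈ newtonDiagram N, z + t • (n - p) = s • (k - p) := by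
  rcases hz with hz | ⟨u, hu, l, hl, rfl⟩
  · refine ⟨t, ht, n + t⁻¹ • z, isUpperSet_newtonDiagram N
      (le_add_of_nonneg_right (smul_nonneg (inv_nonneg.2 ht.le) hz)) hn, ?_⟩
    rw [add_sub_right_comm, smul_add, smul_inv_smul₀ ht.ne', add_comm]
  · have hs : 0 < u + t := add_pos hu ht
    refine ⟨u + t, hs, (u / (u + t)) • l + (t / (u + t)) • n,
      convex_newtonDiagram N hl hn (by positivity) (by positivity) (by field_simp), ?_⟩
    rw [smul_sub (u + t), smul_add (u + t), smul_smul, smul_smul, mul_div_cancel₀ _ hs.ne',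
      mul_div_cancel₀ _ hs.ne']
    module

lemma coneAt_add {N : Set (ℕ × ℕ)} {p y z : ℝ × ℝ} (hy : y ∈ coneAt N p) (hz : z ∈ coneAt N p) :
    y + z ∈ coneAt N p := by
  rcases id hz with hz' | ⟨t, ht, n, hn, rfl⟩
  · rcases id hy with hy' | ⟨t, ht, n, hn, rfl⟩
    · exact Or.inl (add_nonneg hy' hz')
    · rw [add_comm]
      exact Or.inr (coneAt_add_aux hz ht hn)
  · exact Or.inr (coneAt_add_aux hy ht hn)

/-- The cone contains no line through its apex when `p ∉ Δ(N)`. -/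
lemma coneAt_salient {N : Set (ℕ × ℕ)} {p y z : ℝ × ℝ} (hp : p ∉ newtonDiagram N)
    (hy : y ∈ coneAt N p) (hz : z ∈ coneAt N p) (hyz : y + z = 0) : y = 0 := by
  -- An element `s • (k - p)` with `s > 0` and `k ∈ Δ(N)` cannot vanish.
  have key : ∀ {a b : ℝ × ℝ}, a ∈ coneAt N p → a + b = 0 →
      (∃ t : ℝ, 0 < t ∧ ∃ n ∈ newtonDiagram N, b = t • (n - p)) → False := by
    rintro a _ ha hab ⟨t, ht, n, hn, rfl⟩
    obtain ⟨s, hs, k, hk, h⟩ := coneAt_add_aux ha ht hn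
    rw [hab, eq_comm, smul_eq_zero_iff_right hs.ne', sub_eq_zero] at h
    exact hp (h ▸ hk)
  rcases id hz with hz' | hz'
  · rcases id hy with hy' | hy'
    · exact ((add_eq_zero_iff_of_nonneg hy' hz').1 hyz).1
    · exact (key hz (by rwa [add_comm]) hy').elim
  · exact (key hy hyz hz').elim

lemma mem_coneAt_of_mem {M : Set (ℕ × ℕ)} {m : ℕ × ℕ} {x : ℝ × ℝ} (hx : x ∈ newtonDiagram M) :
    x - latticeEmbed m ∈ coneAt (M \ {m}) (latticeEmbed m) := by
  set p := latticeEmbed m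
  have hC : Convex ℝ {x : ℝ × ℝ | x - p ∈ coneAt (M \ {m}) p} := by
    rw [convex_iff_forall_pos]
    intro x hx y hy a b ha hb hab
    have h := coneAt_add (coneAt_smul hx ha) (coneAt_smul hy hb)
    have e : a • (x - p) + b • (y - p) = a • x + b • y - p := by
      rw [show a • (x - p) + b • (y - p) = a • x + b • y - (a + b) • p by module, hab, one_smul]
    rwa [e] at h
  refine newtonDiagram_subset hC ?_ hx
  intro v hv x hvx
  by_cases hvm : v = m
  · subst hvm
    exact Or.inl (sub_nonneg.2 hvx)
  · exact Or.inr ⟨1, one_pos, x, mem_newtonDiagram_of_le (Set.mem_sdiff_singleton.2 ⟨hv, hvm⟩) hvx,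
      (one_smul _ _).symm⟩

/-- A point `m ∈ M` is extreme if dropping it from `M` removes it from the Newton diagram: the
diagram then lies in a cone with apex `m` that contains no line. -/
lemma mem_extremePoints_of_notMem {M : Set (ℕ × ℕ)} {m : ℕ × ℕ} (hm : m ∈ M)
    (h : latticeEmbed m ∉ newtonDiagram (M \ {m})) :
    latticeEmbed m ∈ (newtonDiagram M).extremePoints ℝ := by
  refine ⟨mem_newtonDiagram_of_le hm le_rfl, ?_⟩
  rintro x hx y hy ⟨a, b, ha, hb, hab, e⟩
  have h0 := coneAt_salient h (coneAt_smul (mem_coneAt_of_mem hx) ha)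
    (coneAt_smul (mem_coneAt_of_mem hy) hb) (by
      rw [show a • (x - latticeEmbed m) + b • (y - latticeEmbed m)
        = a • x + b • y - (a + b) • latticeEmbed m by module, hab, one_smul, e, sub_self])
  rwa [smul_eq_zero_iff_right ha.ne', sub_eq_zero] at h0

/-- A form of Dickson's lemma: the minimal points of `E` are finitely many and generate `Δ(E)`. -/
lemma exists_finset_newtonDiagram_eq (E : Set (ℕ × ℕ)) :
    ∃ M : Finset (ℕ × ℕ), (M : Set (ℕ × ℕ)) ⊆ E ∧ newtonDiagram M = newtonDiagram E := by
  have hfin : {v | Minimal (· ∈ E) v}.Finite :=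
    WellQuasiOrderedLE.finite_of_isAntichain (setOfPred_minimal_antichain _)
  have hsub : {v | Minimal (· ∈ E) v} ⊆ E := fun v hv => hv.1
  refine ⟨hfin.toFinset, by simpa using hsub, ?_⟩
  rw [hfin.coe_toFinset]
  refine (newtonDiagram_mono hsub).antisymm (newtonDiagram_subset_of fun v hv => ?_)
  obtain ⟨u, huv, hu⟩ := exists_minimal_le_of_wellFoundedLT (· ∈ E) v hv
  exact mem_newtonDiagram_of_le hu (latticeEmbed_mono huv)

/-- For a nonempty `E ⊆ ℕ²`, the set `E₀` of extreme points of `Δ(E)` is a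
finite subset of `E`, it satisfies `Δ(E₀) = Δ(E)`, and it is contained in any
`F ⊆ ℕ²` with `Δ(F) = Δ(E)`: it is the smallest set of `ℕ²` whose Newton
diagram equals `Δ(E)`. -/
theorem extremePoints_newtonDiagram_smallest
    (E : Set (ℕ × ℕ)) (hE : E.Nonempty) :
    ∃ E₀ : Set (ℕ × ℕ),
      latticeEmbed '' E₀ = (newtonDiagram E).extremePoints ℝ ∧
      E₀ ⊆ E ∧
      E₀.Finite ∧
      newtonDiagram E₀ = newtonDiagram E ∧
      ∀ F : Set (ℕ × ℕ), newtonDiagram F = newtonDiagram E → E₀ ⊆ F := by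
  obtain ⟨M₁, hM₁E, hM₁⟩ := exists_finset_newtonDiagram_eq E
  obtain ⟨M, hMM₁, hM, hmin⟩ := exists_minimal_le_of_wellFoundedLT
    (fun M : Finset (ℕ × ℕ) => newtonDiagram M = newtonDiagram E) M₁ hM₁
  have hext : latticeEmbed '' (M : Set (ℕ × ℕ)) = (newtonDiagram E).extremePoints ℝ := by
    rw [← hM]
    refine Set.Subset.antisymm ?_ (extremePoints_subset_image _)
    rintro _ ⟨m, hm, rfl⟩
    refine mem_extremePoints_of_notMem hm fun hmem => ?_
    -- Otherwise `m` could be dropped from `M`, against minimality.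
    have hdrop : newtonDiagram ((M.erase m : Finset (ℕ × ℕ)) : Set (ℕ × ℕ)) = newtonDiagram E := by
      rw [← hM, Finset.coe_erase]
      refine (newtonDiagram_mono Set.sdiff_subset).antisymm (newtonDiagram_subset_of fun v hv => ?_)
      by_cases hvm : v = m
      · rwa [hvm]
      · exact mem_newtonDiagram_of_le (Set.mem_sdiff_singleton.2 ⟨hv, hvm⟩) le_rfl
    exact Finset.notMem_erase m M (hmin hdrop (Finset.erase_subset m M) hm)
  refine ⟨M, hext, (Finset.coe_subset.2 hMM₁).trans hM₁E, M.finite_toSet, hM, fun F hF => ?_⟩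
  rw [← Set.image_subset_image_iff latticeEmbed_injective, hext, ← hF]
  exact extremePoints_subset_image F
end

section
/- Let k be an algebraically closed field, let p, q ≥ 1 be coprime natural numbers, and let N ∈ ℕ. Let P ∈ k[x,y] be a nonzero polynomial such that every (a,b) in Supp(P) satisfies p·a + q·b = N (i.e. P is quasi-homogeneous with respect to the weights (p,q)). Then there exist c ∈ k \ {0}, a pair (a₀,b₀) ∈ ℕ², an r ∈ ℕ, pairwise distinct elements μ₁, …, μ_r ∈ k \ {0}, and positive integers ν₁, …, ν_r such that P = c · x^{a₀} · y^{b₀} · ∏_{i=1}^{r} (y^p − μ_i x^q)^{ν_i}. -/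
/-!
Reducing exponents modulo `q` and `p`, coprimality shows that all monomials of `P` have the form
`x^{a₀} y^{b₀} (y^p)^j (x^q)^i` with the same `a₀ < q`, `b₀ < p` and the same `n = i + j`.
Hence `P = x^{a₀} y^{b₀} F(y^p, x^q)`, where `F` is homogeneous of degree `n` in two variables
(`exists_eq_mul_aeval_homogenize`). Over an algebraically closed field a binary form splits into
linear factors `u - μ v`, up to a power of `v` (`homogenize_eq_prod`). Substituting
`u = y^p`, `v = x^q` gives the factorization: the powers of `v` and the factor for the root `μ = 0`
are absorbed into the monomial `x^{a₀} y^{b₀}`.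
-/

open MvPolynomial

/-- Linear factorization of the binary form of degree `n` attached to a one-variable
polynomial. The power of `X 1` accounts for the roots at infinity. -/
lemma homogenize_eq_prod {k : Type*} [Field k] [IsAlgClosed k] [DecidableEq k]
    (f : Polynomial k) (n : ℕ) (hn : f.natDegree ≤ n) :
    f.homogenize n = C f.leadingCoeff * X 1 ^ (n - f.natDegree) *
      ∏ a ∈ f.roots.toFinset, (X 0 - C a * X 1) ^ f.roots.count a := by
  have hs := IsAlgClosed.splits f
  have hsum : ∑ a ∈ f.roots.toFinset, f.roots.count a = f.natDegree := by
    rw [Multiset.toFinset_sum_count_eq, hs.natDegree_eq_card_roots]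
  have hf : f = Polynomial.C f.leadingCoeff *
      ∏ a ∈ f.roots.toFinset, (Polynomial.X - Polynomial.C a) ^ f.roots.count a := by
    conv_lhs => rw [hs.eq_prod_roots]
    rw [Finset.prod_multiset_map_count]
  have hdeg : ∀ a ∈ f.roots.toFinset,
      ((Polynomial.X - Polynomial.C a) ^ f.roots.count a).natDegree ≤ f.roots.count a := by
    intro a _
    simp [Polynomial.natDegree_pow]
  have hlin : ∀ (a : k) (m : ℕ),
      ((Polynomial.X - Polynomial.C a) ^ m).homogenize m = (X 0 - C a * X 1) ^ m := by
    intro a m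
    have := Polynomial.homogenize_finsetProd (s := Finset.range m)
      (p := fun _ => Polynomial.X - Polynomial.C a) (n := fun _ => 1) (by simp)
    simpa using this
  have hprod : (∏ a ∈ f.roots.toFinset,
      (Polynomial.X - Polynomial.C a) ^ f.roots.count a).homogenize f.natDegree =
      ∏ a ∈ f.roots.toFinset, (X 0 - C a * X 1) ^ f.roots.count a := by
    rw [← hsum, Polynomial.homogenize_finsetProd hdeg]
    exact Finset.prod_congr rfl fun a _ => hlin a _
  have hg : (∏ a ∈ f.roots.toFinset,
      (Polynomial.X - Polynomial.C a) ^ f.roots.count a).natDegree ≤ f.natDegree :=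
    (Polynomial.natDegree_prod_le _ _).trans ((Finset.sum_le_sum hdeg).trans hsum.le)
  obtain ⟨m, rfl⟩ := Nat.exists_eq_add_of_le' hn
  have hf' := congrArg (Polynomial.homogenize · (m + f.natDegree)) hf
  simp only [Polynomial.homogenize_C_mul] at hf'
  have := Polynomial.homogenize_mul (1 : Polynomial k) _ (m := m) (by simp) hg
  rw [one_mul, hprod, Polynomial.homogenize_one] at this
  rw [hf', this, Nat.add_sub_cancel, mul_assoc]

/-- On the lattice line `p a + q b = N`, the residues of `a` mod `q` and `b` mod `p` are constant,
and so is the sum of the quotients. -/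
lemma exponents_const {p q N a b a' b' : ℕ} (hp : 1 ≤ p) (hq : 1 ≤ q) (hpq : Nat.Coprime p q)
    (h : p * a + q * b = N) (h' : p * a' + q * b' = N) :
    a % q = a' % q ∧ b % p = b' % p ∧ a / q + b / p = a' / q + b' / p := by
  have ha : a % q = a' % q := by
    have : p * a ≡ p * a' [MOD q] := by
      have := congrArg (· % q) (h.trans h'.symm)
      simpa [Nat.ModEq] using this
    exact Nat.ModEq.cancel_left_of_coprime (by simpa using hpq.symm) this
  have hb : b % p = b' % p := by
    have : q * b ≡ q * b' [MOD p] := by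
      have := congrArg (· % p) (h.trans h'.symm)
      simpa [Nat.ModEq] using this
    exact Nat.ModEq.cancel_left_of_coprime (by simpa using hpq) this
  refine ⟨ha, hb, ?_⟩
  have e := h.trans h'.symm
  rw [← Nat.mod_add_div a q, ← Nat.mod_add_div a' q, ← Nat.mod_add_div b p,
    ← Nat.mod_add_div b' p, ha, hb] at e
  have : (p * q) * (a / q + b / p) = (p * q) * (a' / q + b' / p) := by linarith
  exact Nat.eq_of_mul_eq_mul_left (by positivity) this

/-- A quasi-homogeneous polynomial is a monomial times a binary form evaluated at
`(y^p, x^q)`. -/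
lemma exists_eq_mul_aeval_homogenize {k : Type*} [Field k] {p q : ℕ} (hp : 1 ≤ p) (hq : 1 ≤ q)
    (hpq : Nat.Coprime p q) {N : ℕ} {P : MvPolynomial (Fin 2) k} (hP : P ≠ 0)
    (hsupp : ∀ d ∈ P.support, p * d 0 + q * d 1 = N) :
    ∃ (a b n : ℕ) (f : Polynomial k), f.natDegree ≤ n ∧
      P = X 0 ^ a * X 1 ^ b *
        aeval ![(X 1 ^ p : MvPolynomial (Fin 2) k), X 0 ^ q] (f.homogenize n) := by
  obtain ⟨e, he⟩ := Finset.nonempty_of_ne_empty (mt MvPolynomial.support_eq_empty.1 hP)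
  have hc := fun d hd => exponents_const hp hq hpq (hsupp d hd) (hsupp e he)
  have hle : ∀ d ∈ P.support, d 1 / p ≤ e 0 / q + e 1 / p := fun d hd => by
    rw [← (hc d hd).2.2]
    exact Nat.le_add_left _ _
  refine ⟨e 0 % q, e 1 % p, e 0 / q + e 1 / p,
    ∑ d ∈ P.support, Polynomial.monomial (d 1 / p) (P.coeff d), ?_, ?_⟩
  · exact Polynomial.natDegree_sum_le_of_forall_le _ _ fun d hd =>
      (Polynomial.natDegree_monomial_le _).trans (hle d hd)
  · conv_lhs => rw [P.as_sum]
    rw [Polynomial.homogenize_finsetSum, map_sum, Finset.mul_sum]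
    refine Finset.sum_congr rfl fun d hd => ?_
    obtain ⟨h0, h1, h2⟩ := hc d hd
    rw [Polynomial.homogenize_monomial (hle d hd), ← h0, ← h1,
      show e 0 / q + e 1 / p - d 1 / p = d 0 / q by
        rw [← h2, Nat.add_sub_cancel], monomial_eq, aeval_monomial,
      Finsupp.prod_fintype _ _ (by simp), Finsupp.prod_fintype _ _ (by simp)]
    simp only [Fin.prod_univ_two, MvPolynomial.algebraMap_eq]
    conv_lhs => rw [← Nat.mod_add_div (d 0) q, ← Nat.mod_add_div (d 1) p]
    simp [pow_add, pow_mul]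
    ring

/-- Factorization of a quasi-homogeneous polynomial in two variables over an
algebraically closed field: if every `(a,b)` in the support of `P ≠ 0`
satisfies `p·a + q·b = N` (with `p, q ≥ 1` coprime), then
`P = c · x^{a₀} y^{b₀} ∏ᵢ (y^p − μᵢ x^q)^{νᵢ}` with `c ≠ 0`, the `μᵢ` nonzero
and pairwise distinct, and the `νᵢ` positive. -/
theorem quasiHomogeneous_factorization
    {k : Type*} [Field k] [IsAlgClosed k] (p q : ℕ) (hp : 1 ≤ p) (hq : 1 ≤ q)
    (hpq : Nat.Coprime p q) (N : ℕ)
    (P : MvPolynomial (Fin 2) k) (hP : P ≠ 0)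
    (hsupp : ∀ d ∈ P.support, p * d 0 + q * d 1 = N) :
    ∃ (c : k) (a₀ b₀ r : ℕ) (μ : Fin r → k) (ν : Fin r → ℕ),
      c ≠ 0 ∧ (∀ i, μ i ≠ 0) ∧ Function.Injective μ ∧ (∀ i, 0 < ν i) ∧
      P = C c * X 0 ^ a₀ * X 1 ^ b₀ *
        ∏ i, (X 1 ^ p - C (μ i) * X 0 ^ q) ^ ν i := by
  classical
  obtain ⟨a, b, n, f, hn, hPf⟩ := exists_eq_mul_aeval_homogenize hp hq hpq hP hsupp
  have hf : f ≠ 0 := by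
    rintro rfl
    simp [hP] at hPf
  set S := f.roots.toFinset.erase 0 with hS
  have hmem : ∀ i, (S.equivFin.symm i : k) ∈ S := fun i => (S.equivFin.symm i).2
  -- The factors `v ^ (n - deg f)` and `u ^ (multiplicity of 0)` become powers of `x` and `y`.
  refine ⟨f.leadingCoeff, a + q * (n - f.natDegree), b + p * f.roots.count 0, S.card,
    fun i => S.equivFin.symm i, fun i => f.roots.count (S.equivFin.symm i : k),
    Polynomial.leadingCoeff_ne_zero.2 hf, fun i => (Finset.mem_erase.1 (hmem i)).1,
    Subtype.val_injective.comp S.equivFin.symm.injective,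
    fun i => Multiset.count_pos.2 (Multiset.mem_toFinset.1 (Finset.mem_erase.1 (hmem i)).2), ?_⟩
  rw [Equiv.prod_comp S.equivFin.symm
      (fun x : S => (X 1 ^ p - C (x : k) * X 0 ^ q : MvPolynomial (Fin 2) k) ^ f.roots.count (x : k)),
    Finset.prod_coe_sort S
      (fun x => (X 1 ^ p - C x * X 0 ^ q : MvPolynomial (Fin 2) k) ^ f.roots.count x)]
  have hzero : ∏ x ∈ f.roots.toFinset,
      (X 1 ^ p - C x * X 0 ^ q : MvPolynomial (Fin 2) k) ^ f.roots.count x =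
      (X 1 ^ p) ^ f.roots.count 0 *
        ∏ x ∈ S, (X 1 ^ p - C x * X 0 ^ q : MvPolynomial (Fin 2) k) ^ f.roots.count x := by
    by_cases h0 : (0 : k) ∈ f.roots.toFinset
    · rw [hS, ← Finset.mul_prod_erase _ _ h0]
      simp
    · rw [hS, Finset.erase_eq_of_notMem h0,
        Multiset.count_eq_zero.2 (fun h => h0 (Multiset.mem_toFinset.2 h)), pow_zero, one_mul]
  rw [hPf, homogenize_eq_prod f n hn]
  simp only [map_mul, map_pow, map_prod, map_sub, aeval_X, aeval_C, MvPolynomial.algebraMap_eq,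
    Matrix.cons_val_zero, Matrix.cons_val_one]
  rw [hzero]
  ring
end

section
/- Let k be a field, let p, q ≥ 1 be coprime natural numbers, let p', q' ∈ ℕ satisfy p·p' − q·q' = 1, let μ ∈ k \ {0}, and let P ∈ k[x,y] be nonzero. Set 𝔪 = 𝔪_P(p,q) and let P_{(p,q)} be the face polynomial of P in direction (p,q). Then there is a unique polynomial R ∈ k[x₁,y₁] such that σ_{(p,q,μ)}(P)(x₁,y₁) = x₁^{𝔪} · R(x₁,y₁), and this R satisfies R(0,y₁) = P_{(p,q)}(μ^{q'}, y₁ + μ^{p'}) as polynomials in y₁. -/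
/-!
Substituting `(μ^{q'} x₁^p, x₁^q (y₁ + μ^{p'}))` into a monomial `c x^a y^b` gives
`x₁^{p a + q b} · c μ^{q' a} (y₁ + μ^{p'})^b`. By minimality of `𝔪 = 𝔪_P(p,q)`, every exponent
`p a + q b` on the support of `P` is at least `𝔪`, so `x₁^𝔪` factors out of the transform; the
cofactor is `newtonQuotient`. It is unique because `k[x₁,y₁]` is a domain. At `x₁ = 0` only the
terms with `p a + q b = 𝔪` survive, and these are the terms of the face polynomial evaluated at
`(μ^{q'}, y₁ + μ^{p'})`.
-/

open MvPolynomial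

variable {k : Type*} [Field k]

/-- The Newton transformation `σ_{(p,q,μ)}` (with auxiliary exponents `p', q'`):
`σ_{(p,q,μ)}(P)(x₁,y₁) = P(μ^{q'} x₁^p, x₁^q (y₁ + μ^{p'}))`. -/
noncomputable def newtonTransform (p q p' q' : ℕ) (μ : k)
    (P : MvPolynomial (Fin 2) k) : MvPolynomial (Fin 2) k :=
  MvPolynomial.aeval
    ![C (μ ^ q') * X 0 ^ p, X 0 ^ q * (X 1 + C (μ ^ p'))] P

/-- The support function value `𝔪_P(p,q) = min {p·a + q·b : (a,b) ∈ Supp P}`. -/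
noncomputable def mSupp (p q : ℕ) (P : MvPolynomial (Fin 2) k) : ℕ :=
  sInf {n : ℕ | ∃ d ∈ P.support, p * d 0 + q * d 1 = n}

/-- The face polynomial of `P` in direction `(p,q)`:
`P_{(p,q)} = Σ_{(a,b) ∈ Supp P, p·a + q·b = 𝔪_P(p,q)} c_{a,b} x^a y^b`. -/
noncomputable def facePoly (p q : ℕ) (P : MvPolynomial (Fin 2) k) :
    MvPolynomial (Fin 2) k :=
  ∑ d ∈ P.support.filter (fun d => p * d 0 + q * d 1 = mSupp p q P),
    monomial d (coeff d P)

/-- The cofactor of `x₁^𝔪` in the Newton transform, written term by term. The subtraction in the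
exponent does not truncate on the support of `P`, by `mSupp_le`. -/
noncomputable def newtonQuotient (p q p' q' : ℕ) (μ : k)
    (P : MvPolynomial (Fin 2) k) : MvPolynomial (Fin 2) k :=
  ∑ d ∈ P.support, C (coeff d P) *
    (X 0 ^ (p * d 0 + q * d 1 - mSupp p q P) *
      (C (μ ^ q') ^ d 0 * (X 1 + C (μ ^ p')) ^ d 1))

theorem mSupp_le (p q : ℕ) {P : MvPolynomial (Fin 2) k} {d : Fin 2 →₀ ℕ}
    (hd : d ∈ P.support) : mSupp p q P ≤ p * d 0 + q * d 1 :=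
  Nat.sInf_le ⟨d, hd, rfl⟩

theorem newtonTransform_eq_pow_mul_newtonQuotient (p q p' q' : ℕ) (μ : k)
    (P : MvPolynomial (Fin 2) k) :
    newtonTransform p q p' q' μ P = X 0 ^ mSupp p q P * newtonQuotient p q p' q' μ P := by
  rw [newtonTransform, aeval_def, eval₂_eq', newtonQuotient, Finset.mul_sum]
  refine Finset.sum_congr rfl fun d hd => ?_
  obtain ⟨e, he⟩ := Nat.exists_eq_add_of_le (mSupp_le p q hd)
  have hpow : (X 0 : MvPolynomial (Fin 2) k) ^ (p * d 0) * X 0 ^ (q * d 1)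
      = X 0 ^ mSupp p q P * X 0 ^ e := by
    rw [← pow_add, ← pow_add, he]
  rw [he, Nat.add_sub_cancel_left]
  simp only [Fin.prod_univ_two, Matrix.cons_val_zero, Matrix.cons_val_one, mul_pow, ← pow_mul,
    algebraMap_eq]
  linear_combination (C (coeff d P) * C (μ ^ q') ^ d 0 * (X 1 + C (μ ^ p')) ^ d 1) * hpow

theorem aeval_newtonQuotient (p q p' q' : ℕ) (μ : k) (P : MvPolynomial (Fin 2) k) :
    (aeval ![(0 : Polynomial k), Polynomial.X] (newtonQuotient p q p' q' μ P) : Polynomial k) =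
      aeval ![Polynomial.C (μ ^ q'), Polynomial.X + Polynomial.C (μ ^ p')]
        (facePoly p q P) := by
  rw [newtonQuotient, facePoly, map_sum, map_sum, Finset.sum_filter]
  refine Finset.sum_congr rfl fun d hd => ?_
  have hle := mSupp_le p q hd
  simp only [map_mul, map_pow, map_add, aeval_X, algHom_C, Matrix.cons_val_zero,
    Matrix.cons_val_one]
  split_ifs with h
  · rw [h, Nat.sub_self, pow_zero, one_mul, aeval_monomial,
      Finsupp.prod_fintype _ _ (fun i => pow_zero _), Fin.prod_univ_two]
    simp
  · rw [zero_pow (by omega), zero_mul, mul_zero]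

/-- For a nonzero `P ∈ k[x,y]`, `p,q ≥ 1` coprime, `p·p' − q·q' = 1` and
`μ ≠ 0`, there is a unique polynomial `R` with
`σ_{(p,q,μ)}(P) = x₁^{𝔪_P(p,q)} · R`, and this `R` satisfies
`R(0,y₁) = P_{(p,q)}(μ^{q'}, y₁ + μ^{p'})`. -/
theorem newtonTransform_eq_pow_mul_unique
    (p q p' q' : ℕ) (hp : 1 ≤ p) (hq : 1 ≤ q) (hpq : Nat.Coprime p q)
    (hpp' : p * p' = q * q' + 1) (μ : k) (hμ : μ ≠ 0)
    (P : MvPolynomial (Fin 2) k) (hP : P ≠ 0) :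
    (∃! R : MvPolynomial (Fin 2) k,
        newtonTransform p q p' q' μ P = X 0 ^ mSupp p q P * R) ∧
    ∀ R : MvPolynomial (Fin 2) k,
      newtonTransform p q p' q' μ P = X 0 ^ mSupp p q P * R →
      (MvPolynomial.aeval ![(0 : Polynomial k), Polynomial.X] R : Polynomial k) =
        MvPolynomial.aeval
          ![Polynomial.C (μ ^ q'), Polynomial.X + Polynomial.C (μ ^ p')]
          (facePoly p q P) := by
  have hcancel : ∀ R : MvPolynomial (Fin 2) k,
      newtonTransform p q p' q' μ P = X 0 ^ mSupp p q P * R →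
        R = newtonQuotient p q p' q' μ P := fun R hR =>
    mul_left_cancel₀ (pow_ne_zero _ (X_ne_zero 0))
      (hR.symm.trans (newtonTransform_eq_pow_mul_newtonQuotient p q p' q' μ P))
  refine ⟨⟨_, newtonTransform_eq_pow_mul_newtonQuotient p q p' q' μ P, hcancel⟩, fun R hR => ?_⟩
  rw [hcancel R hR]
  exact aeval_newtonQuotient p q p' q' μ P
end

section
/- Let k be an algebraically closed field of characteristic zero, let p, q ≥ 1 be coprime natural numbers, let p', q' ∈ ℕ satisfy p·p' − q·q' = 1, let μ ∈ k \ {0}, and let P ∈ k[x,y] be nonzero. Set N = 𝔪_P(p,q). Suppose the set {(a,b) ∈ Supp(P) : p·a + q·b = N} has at least two elements (the corresponding face of the Newton polygon is one-dimensional with supporting line p·a + q·b = N), and suppose μ is not a root of the face polynomial, i.e. P_{(p,q)}(μ^{q'}, μ^{p'}) ≠ 0. Then there exists a polynomial u ∈ k[x₁,y₁] with u(0,0) ≠ 0 such that σ_{(p,q,μ)}(P)(x₁,y₁) = x₁^{N} · u(x₁,y₁). -/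
/-!
Substituting `x = μ^{q'} x₁^p`, `y = x₁^q (y₁ + μ^{p'})` turns the monomial `c x^a y^b` into
`x₁^{p a + q b} · c μ^{q' a} (y₁ + μ^{p'})^b`. Every exponent `p a + q b` is at least
`N = 𝔪_P(p,q)`, so `x₁^N` factors out of the whole sum. At the origin the cofactor keeps exactly
the monomials with `p a + q b = N`, each contributing `c μ^{q' a} μ^{p' b}`; its value there is
therefore `P_{(p,q)}(μ^{q'}, μ^{p'})`, which is nonzero by assumption.
-/

open MvPolynomial

variable {k : Type*} [Field k]

/-- Lemma 2(2) of the Newton algorithm (one-dimensional face, non-root case):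
over an algebraically closed field of characteristic zero, if the face of the
Newton polygon of `P` dual to `(p,q)` is one-dimensional (the minimizing part
of the support has at least two points) and `μ` is not a root of the face
polynomial (i.e. `P_{(p,q)}(μ^{q'}, μ^{p'}) ≠ 0`), then
`σ_{(p,q,μ)}(P) = x₁^{N} · u(x₁,y₁)` with `u(0,0) ≠ 0`, where `N = 𝔪_P(p,q)`. -/
theorem newtonTransform_nonroot_case
    [IsAlgClosed k] [CharZero k]
    (p q p' q' : ℕ) (hp : 1 ≤ p) (hq : 1 ≤ q) (hpq : Nat.Coprime p q)
    (hpp' : p * p' = q * q' + 1) (μ : k) (hμ : μ ≠ 0)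
    (P : MvPolynomial (Fin 2) k) (hP : P ≠ 0)
    (hface :
      2 ≤ (P.support.filter (fun d => p * d 0 + q * d 1 = mSupp p q P)).card)
    (hnonroot : MvPolynomial.eval ![μ ^ q', μ ^ p'] (facePoly p q P) ≠ 0) :
    ∃ u : MvPolynomial (Fin 2) k,
      MvPolynomial.eval (fun _ => (0 : k)) u ≠ 0 ∧
      newtonTransform p q p' q' μ P = X 0 ^ mSupp p q P * u := by
  classical
  have hN : ∀ d ∈ P.support, mSupp p q P ≤ p * d 0 + q * d 1 :=
    fun d hd => Nat.sInf_le ⟨d, hd, rfl⟩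
  refine ⟨∑ d ∈ P.support, C (coeff d P) * (C (μ ^ q') ^ d 0 * (X 1 + C (μ ^ p')) ^ d 1) *
    X 0 ^ (p * d 0 + q * d 1 - mSupp p q P), ?_, ?_⟩
  · convert hnonroot using 1
    simp only [facePoly, map_sum, Finset.sum_filter]
    refine Finset.sum_congr rfl fun d hd => ?_
    split_ifs with h
    · simp [h, eval_monomial, Finsupp.prod_fintype, Fin.prod_univ_two]
    -- Off the face the power of `X 0` is positive, so the term vanishes at the origin.
    · have hlt : p * d 0 + q * d 1 - mSupp p q P ≠ 0 := by
        have := hN d hd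
        omega
      simp [hlt]
  · rw [newtonTransform, aeval_def, eval₂_eq', Finset.mul_sum]
    refine Finset.sum_congr rfl fun d hd => ?_
    rw [show (X 0 : MvPolynomial (Fin 2) k) ^ mSupp p q P *
        (C (coeff d P) * (C (μ ^ q') ^ d 0 * (X 1 + C (μ ^ p')) ^ d 1) *
          X 0 ^ (p * d 0 + q * d 1 - mSupp p q P)) =
        X 0 ^ (mSupp p q P + (p * d 0 + q * d 1 - mSupp p q P)) *
          (C (coeff d P) * (C (μ ^ q') ^ d 0 * (X 1 + C (μ ^ p')) ^ d 1)) by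
        rw [pow_add]; ring, Nat.add_sub_cancel' (hN d hd)]
    simp only [Fin.prod_univ_two, Matrix.cons_val_zero, Matrix.cons_val_one, mul_pow, ← pow_mul,
      pow_add, algebraMap_eq]
    ring
end

section
/- Let k be an algebraically closed field of characteristic zero, let p, q ≥ 1 be coprime natural numbers, let p', q' ∈ ℕ satisfy p·p' − q·q' = 1, let μ ∈ k \ {0}, and let P ∈ k[x,y] be nonzero. Suppose the one-variable polynomial g(y) = P_{(p,q)}(μ^{q'}, y + μ^{p'}) vanishes at y = 0 to order exactly ν with ν ≥ 1. Then h(P) ≥ ν ≥ h(σ_{(p,q,μ)}(P)), where h denotes the height. -/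
/-!
Write `P = Σ c_d x^a y^b` with `d = (a, b)`, let `m = 𝔪_P(p,q)` and let
`g(y) = P_{(p,q)}(μ^{q'}, y + μ^{p'}) = Σ c_d μ^{q' a} (y + μ^{p'})^b`, the sum running over the face
`p a + q b = m`.

* `ν ≤ h(P)`. Let `β` be the least `y`-exponent of `P` and `B` the least `y`-exponent over the
  leftmost column. If `d` lies on the face then `β ≤ b ≤ B`, the upper bound because the point
  `(a_min, B)` has weight at least `m` while `a_min ≤ a`. So `g = (y + μ^{p'})^β H` with
  `deg H ≤ B - β`, and the first factor does not vanish at `y = 0`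
  (`rootMultiplicity_face_le`).
* `h(σ(P)) ≤ ν`. We have `σ(P) = Σ c_d μ^{q' a} x₁^{p a + q b} (y₁ + μ^{p'})^b`. Hence `x₁^m` is the
  lowest power of `x₁` in `σ(P)` and its coefficient is `g(y₁)`, whose order at `0` is `ν`
  (`coeff_toBivar_newtonTransform`).
-/

open MvPolynomial

variable {k : Type*} [Field k]

/-- The height of a polynomial `P ∈ k[x,y]`: with
`a_min = min {a : (a,b) ∈ Supp P}`, it is
`h(P) = min {b : (a_min, b) ∈ Supp P} − min {b : (a,b) ∈ Supp P}`. -/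
noncomputable def hgt (P : MvPolynomial (Fin 2) k) : ℕ :=
  sInf {b : ℕ | ∃ d ∈ P.support,
      d 0 = sInf {a : ℕ | ∃ d' ∈ P.support, d' 0 = a} ∧ d 1 = b}
    - sInf {b : ℕ | ∃ d ∈ P.support, d 1 = b}

/-- The identification of `k[x,y]` with `k[y][x]`: the inner variable is `y`, the outer one is `x`. -/
noncomputable def toBivar :
    MvPolynomial (Fin 2) k →ₐ[k] Polynomial (Polynomial k) :=
  MvPolynomial.aeval ![Polynomial.X, Polynomial.C Polynomial.X]

lemma coeff_coeff_toBivar (P : MvPolynomial (Fin 2) k) (e : Fin 2 →₀ ℕ) :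
    ((toBivar P).coeff (e 0)).coeff (e 1) = coeff e P := by
  classical
  induction P using MvPolynomial.induction_on' with
  | add P Q hP hQ => simp [hP, hQ]
  | monomial d c =>
    have hde : d = e ↔ e 0 = d 0 ∧ e 1 = d 1 := by
      constructor
      · rintro rfl; exact ⟨rfl, rfl⟩
      · rintro ⟨h0, h1⟩
        ext i
        fin_cases i
        · exact h0.symm
        · exact h1.symm
    have hmon : toBivar (monomial d c) =
        Polynomial.C (Polynomial.C c * Polynomial.X ^ d 1) * Polynomial.X ^ d 0 := by
      rw [toBivar, aeval_monomial, Finsupp.prod_fintype _ _ (fun i => pow_zero _)]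
      simp [Fin.prod_univ_two, Polynomial.algebraMap_apply]
      ring
    rw [hmon, Polynomial.coeff_C_mul_X_pow, coeff_monomial]
    simp only [hde]
    by_cases h0 : e 0 = d 0 <;> by_cases h1 : e 1 = d 1 <;>
      simp [h0, h1, Polynomial.coeff_X_pow]

/-- In `σ(P)` the coefficient of `x₁^n` collects the monomials of `P` of weight `n`. -/
lemma coeff_toBivar_newtonTransform (p q p' q' : ℕ) (μ : k) (P : MvPolynomial (Fin 2) k) (n : ℕ) :
    (toBivar (newtonTransform p q p' q' μ P)).coeff n =
      ∑ d ∈ P.support.filter (fun d => p * d 0 + q * d 1 = n),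
        Polynomial.C (coeff d P * (μ ^ q') ^ d 0) *
          (Polynomial.X + Polynomial.C (μ ^ p')) ^ d 1 := by
  have h : toBivar (newtonTransform p q p' q' μ P) =
      ∑ d ∈ P.support, Polynomial.C (Polynomial.C (coeff d P * (μ ^ q') ^ d 0) *
          (Polynomial.X + Polynomial.C (μ ^ p')) ^ d 1) *
            Polynomial.X ^ (p * d 0 + q * d 1) := by
    rw [newtonTransform]
    conv_lhs => rw [P.as_sum]
    rw [map_sum, map_sum]
    refine Finset.sum_congr rfl fun d _ => ?_
    rw [aeval_monomial, Finsupp.prod_fintype _ _ (fun i => pow_zero _)]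
    simp [Fin.prod_univ_two, toBivar, Polynomial.algebraMap_apply, MvPolynomial.algebraMap_eq,
      mul_pow]
    ring
  rw [h, Polynomial.finsetSum_coeff, Finset.sum_filter]
  refine Finset.sum_congr rfl fun d _ => ?_
  rw [Polynomial.coeff_C_mul_X_pow]
  simp only [eq_comm]

lemma aeval_facePoly (p q p' q' : ℕ) (μ : k) (P : MvPolynomial (Fin 2) k) :
    (MvPolynomial.aeval
        ![Polynomial.C (μ ^ q'), Polynomial.X + Polynomial.C (μ ^ p')]
        (facePoly p q P) : Polynomial k) =
      ∑ d ∈ P.support.filter (fun d => p * d 0 + q * d 1 = mSupp p q P),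
        Polynomial.C (coeff d P * (μ ^ q') ^ d 0) *
          (Polynomial.X + Polynomial.C (μ ^ p')) ^ d 1 := by
  rw [facePoly, map_sum]
  refine Finset.sum_congr rfl fun d _ => ?_
  rw [aeval_monomial, Finsupp.prod_fintype _ _ (fun i => pow_zero _)]
  simp [Fin.prod_univ_two]
  ring

/-- A combination of powers `(y + u)^b` with `β ≤ b ≤ B` and `u ≠ 0` vanishes at `0` to order at most
`B - β`: it is `(y + u)^β`, a unit at `0`, times a polynomial of degree at most `B - β`. -/
lemma rootMultiplicity_face_le {ι : Type*} (s : Finset ι) (b : ι → ℕ) (c : ι → k) (u : k)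
    (hu : u ≠ 0) (β B : ℕ) (hb : ∀ i ∈ s, β ≤ b i ∧ b i ≤ B)
    (hne : ∑ i ∈ s, Polynomial.C (c i) * (Polynomial.X + Polynomial.C u) ^ b i ≠ 0) :
    Polynomial.rootMultiplicity 0
      (∑ i ∈ s, Polynomial.C (c i) * (Polynomial.X + Polynomial.C u) ^ b i) ≤ B - β := by
  set H : Polynomial k :=
    ∑ i ∈ s, Polynomial.C (c i) * (Polynomial.X + Polynomial.C u) ^ (b i - β) with hH
  have hfac : ∑ i ∈ s, Polynomial.C (c i) * (Polynomial.X + Polynomial.C u) ^ b i =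
      (Polynomial.X + Polynomial.C u) ^ β * H := by
    rw [hH, Finset.mul_sum]
    refine Finset.sum_congr rfl fun i hi => ?_
    rw [mul_left_comm, ← pow_add, Nat.add_sub_cancel' (hb i hi).1]
  rw [hfac] at hne ⊢
  have hunit : Polynomial.rootMultiplicity 0 ((Polynomial.X + Polynomial.C u) ^ β) = 0 := by
    apply Polynomial.rootMultiplicity_eq_zero
    simp [Polynomial.IsRoot, hu]
  have hdeg : H.natDegree ≤ B - β := by
    refine Polynomial.natDegree_sum_le_of_forall_le _ _ fun i hi => ?_
    refine (Polynomial.natDegree_C_mul_le _ _).trans ?_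
    rw [Polynomial.natDegree_pow, Polynomial.natDegree_X_add_C, mul_one]
    exact Nat.sub_le_sub_right (hb i hi).2 _
  have hH0 : H ≠ 0 := right_ne_zero_of_mul hne
  rw [Polynomial.rootMultiplicity_mul hne, hunit, zero_add]
  calc H.rootMultiplicity 0 ≤ H.roots.card := by
        classical
        rw [← Polynomial.count_roots]; exact Multiset.count_le_card _ _
    _ ≤ H.natDegree := Polynomial.card_roots' H
    _ ≤ B - β := hdeg

/-- Every `y`-exponent on the face of direction `(p,q)` lies between the two exponents whose
difference is the height. -/
lemma face_exponent_bounds (p q : ℕ) (hq : 1 ≤ q) (P : MvPolynomial (Fin 2) k)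
    (d : Fin 2 →₀ ℕ) (hd : d ∈ P.support) (hface : p * d 0 + q * d 1 = mSupp p q P) :
    sInf {b : ℕ | ∃ d ∈ P.support, d 1 = b} ≤ d 1 ∧
      d 1 ≤ sInf {b : ℕ | ∃ d ∈ P.support,
        d 0 = sInf {a : ℕ | ∃ d' ∈ P.support, d' 0 = a} ∧ d 1 = b} := by
  refine ⟨Nat.sInf_le ⟨d, hd, rfl⟩, ?_⟩
  obtain ⟨l, hl, hl0⟩ :=
    Nat.sInf_mem (s := {a : ℕ | ∃ d' ∈ P.support, d' 0 = a}) ⟨_, d, hd, rfl⟩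
  refine le_csInf ⟨_, l, hl, hl0, rfl⟩ ?_
  rintro _ ⟨e, he, he0, rfl⟩
  have h1 : e 0 ≤ d 0 := he0 ▸ Nat.sInf_le ⟨d, hd, rfl⟩
  have h2 : p * d 0 + q * d 1 ≤ p * e 0 + q * e 1 := hface ▸ Nat.sInf_le ⟨e, he, rfl⟩
  have h3 : p * e 0 ≤ p * d 0 := Nat.mul_le_mul_left p h1
  exact Nat.le_of_mul_le_mul_left (by omega : q * d 1 ≤ q * e 1) hq

/-- Height inequality in the Newton algorithm: if `μ` is a root of
multiplicity `ν ≥ 1` of the face polynomial (i.e. `g(y) = P_{(p,q)}(μ^{q'}, y + μ^{p'})`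
vanishes at `y = 0` to order exactly `ν`), then
`h(P) ≥ ν ≥ h(σ_{(p,q,μ)}(P))`. -/
theorem height_newtonTransform_le
    [IsAlgClosed k] [CharZero k]
    (p q p' q' : ℕ) (hp : 1 ≤ p) (hq : 1 ≤ q) (hpq : Nat.Coprime p q)
    (hpp' : p * p' = q * q' + 1) (μ : k) (hμ : μ ≠ 0)
    (P : MvPolynomial (Fin 2) k) (hP : P ≠ 0) (ν : ℕ) (hν : 1 ≤ ν)
    (hg :
      (MvPolynomial.aeval
          ![Polynomial.C (μ ^ q'), Polynomial.X + Polynomial.C (μ ^ p')]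
          (facePoly p q P) : Polynomial k) ≠ 0)
    (hmult :
      Polynomial.rootMultiplicity 0
        (MvPolynomial.aeval
          ![Polynomial.C (μ ^ q'), Polynomial.X + Polynomial.C (μ ^ p')]
          (facePoly p q P) : Polynomial k) = ν) :
    ν ≤ hgt P ∧ hgt (newtonTransform p q p' q' μ P) ≤ ν := by
  rw [aeval_facePoly] at hg hmult
  refine ⟨?_, ?_⟩
  · rw [← hmult]
    refine rootMultiplicity_face_le _ _ _ _ (pow_ne_zero _ hμ) _ _ (fun d hd => ?_) hg
    rw [Finset.mem_filter] at hd
    exact face_exponent_bounds p q hq P d hd.1 hd.2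
  · set Q := newtonTransform p q p' q' μ P with hQ
    set m := mSupp p q P with hm
    rw [← coeff_toBivar_newtonTransform] at hg hmult
    -- The order of vanishing at `0` is the lowest exponent, so `(m, ν)` lies in the support.
    obtain ⟨e, he0, he1⟩ : ∃ e : Fin 2 →₀ ℕ, e 0 = m ∧ e 1 = ν :=
      ⟨Finsupp.equivFunOnFinite.symm ![m, ν], by simp, by simp⟩
    have he : e ∈ Q.support := by
      rw [mem_support_iff, ← coeff_coeff_toBivar, he0, he1, ← hmult,
        Polynomial.rootMultiplicity_eq_natTrailingDegree']
      exact Polynomial.coeff_natTrailingDegree_ne_zero.mpr hg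
    have hmin : ∀ e' ∈ Q.support, m ≤ e' 0 := by
      intro e' he'
      by_contra! hlt
      rw [mem_support_iff, ← coeff_coeff_toBivar, hQ, coeff_toBivar_newtonTransform,
        Finset.filter_eq_empty_iff.mpr] at he'
      · simp at he'
      · intro d hd hde
        have : m ≤ p * d 0 + q * d 1 := Nat.sInf_le ⟨d, hd, rfl⟩
        omega
    have hamin : sInf {a : ℕ | ∃ d' ∈ Q.support, d' 0 = a} = m := by
      refine le_antisymm (Nat.sInf_le ⟨e, he, he0⟩) (le_csInf ⟨_, e, he, rfl⟩ ?_)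
      rintro _ ⟨e', he', rfl⟩
      exact hmin e' he'
    exact (Nat.sub_le _ _).trans (Nat.sInf_le ⟨e, he, by rw [hamin, he0], he1⟩)
end
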